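/- Let b > 0, ħ = (b + b⁻¹)⁻², and Φ_b be Faddeev's quantum dilogarithm. For all z in the strip ℝ + i(-1/(2√ħ), 1/(2√ħ)), the inversion relation Φ_b(z)·Φ_b(-z) = e^{iπ(b² + b⁻²)/12}·e^{iπz²} holds. -/

import Mathlib

open Complex Real

/-- Faddeev's quantum dilogarithm
`Φ_b(z) = exp((1/4)∫_{ℝ+i0⁺} e^{-2izw}/(sinh(bw) sinh(b⁻¹w) w) dw)`,
with the contour `ℝ + i0⁺` realized as the horizontal line `ℝ + iε₀` where
`ε₀ = π·min(b,b⁻¹)/2` lies strictly between `0` and the first pole of the integrand on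
the positive imaginary axis. -/
noncomputable def faddeevPhi (b : ℝ) (z : ℂ) : ℂ :=
  Complex.exp ((1 / 4 : ℂ) * ∫ x : ℝ,
    Complex.exp (-2 * Complex.I * z * ((x : ℂ) + ((π * min b b⁻¹ / 2 : ℝ) : ℂ) * Complex.I)) /
      (Complex.sinh ((b : ℂ) * ((x : ℂ) + ((π * min b b⁻¹ / 2 : ℝ) : ℂ) * Complex.I)) *
       Complex.sinh (((b : ℂ))⁻¹ * ((x : ℂ) + ((π * min b b⁻¹ / 2 : ℝ) : ℂ) * Complex.I)) *
       ((x : ℂ) + ((π * min b b⁻¹ / 2 : ℝ) : ℂ) * Complex.I)))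

/-!
Substituting `w ↦ -w` in the integral that defines `Φ_b(-z)` turns it into minus the integral for
`Φ_b(z)` along the line below the origin. The exponent of `Φ_b(z) Φ_b(-z)` is therefore a quarter of
the integral of one function along two horizontal lines, run in opposite directions around its
triple pole at `0`. With `sinhc w = sinh w / w`, Cauchy's formula evaluates the integral along the
two lines as `-π * I` times the second derivative at `0` of
`exp (-2 * I * z * w) / (sinhc (b * w) * sinhc (b⁻¹ * w))`, which is
`-4 * z ^ 2 - (b ^ 2 + b⁻¹ ^ 2) / 3`.
-/

open Filter Topology MeasureTheory Set Bornology
open scoped Interval Nat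

section Strip

variable {E : Type*} [NormedAddCommGroup E] [NormedSpace ℂ E] {f g : ℂ → E} {a b c : ℝ}

/-- The integral of `f` over the segment from `-R + ci` to `R + ci`. Integrals along `ℝ + ci` are
taken as its limit for `R → ∞`, which makes sense of them for `f w = w⁻¹` as well. -/
noncomputable def horizontalIntegral (f : ℂ → E) (c R : ℝ) : E :=
  ∫ x in (-R)..R, f (x + c * I)

/-- The two ends of the strip between `ℝ + ai` and `ℝ + bi`: the filter of `|re w| → ∞` within the
closed strip. -/
def stripEnds (a b : ℝ) : Filter ℂ :=
  comap (fun w : ℂ => |w.re|) atTop ⊓ 𝓟 (im ⁻¹' [[a, b]])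

theorem stripEnds_le_cobounded : stripEnds a b ≤ cobounded ℂ :=
  inf_le_left.trans <| tendsto_id'.1 <| tendsto_norm_atTop_iff_cobounded.1 <|
    tendsto_atTop_mono abs_re_le_norm tendsto_comap

theorem tendsto_add_mul_I_stripEnds {ι : Type*} {l : Filter ι} {u : ι → ℝ}
    (hu : Tendsto (fun i => |u i|) l atTop) :
    Tendsto (fun p : ι × ℝ => (u p.1 : ℂ) + p.2 * I) (l ×ˢ 𝓟 [[a, b]]) (stripEnds a b) := by
  refine tendsto_inf.2 ⟨tendsto_comap_iff.2 ?_, tendsto_principal.2 ?_⟩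
  · simpa [Function.comp_def] using hu.comp tendsto_fst
  · exact eventually_prod_principal_iff.2 (.of_forall fun i y hy => by simpa using hy)

theorem tendsto_add_mul_I_cobounded {ι : Type*} {l : Filter ι} {u : ι → ℝ}
    (hu : Tendsto (fun i => |u i|) l atTop) (c : ℝ) :
    Tendsto (fun i => (u i : ℂ) + c * I) l (cobounded ℂ) :=
  ((tendsto_add_mul_I_stripEnds hu).mono_right stripEnds_le_cobounded).comp
    (tendsto_id.prodMk (tendsto_principal.2 (.of_forall fun _ => left_mem_uIcc (a := c) (b := c))))

theorem tendsto_verticalIntegral_zero (hf : Tendsto f (stripEnds a b) (𝓝 0)) {ι : Type*}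
    {l : Filter ι} {u : ι → ℝ} (hu : Tendsto (fun i => |u i|) l atTop) :
    Tendsto (fun i => ∫ y in a..b, f (u i + y * I)) l (𝓝 0) := by
  have hbound (δ : ℝ) (hδ : 0 < δ) : ∀ᶠ i in l, ‖∫ y in a..b, f (u i + y * I)‖ ≤ δ * |b - a| := by
    have hsmall := (hf.comp (tendsto_add_mul_I_stripEnds hu)).norm.eventually_le_const
      (norm_zero.trans_lt hδ)
    filter_upwards [eventually_prod_principal_iff.1 hsmall] with i hi
    exact intervalIntegral.norm_integral_le_of_norm_le_const fun y hy =>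
      hi y (uIoc_subset_uIcc hy)
  refine NormedAddGroup.tendsto_nhds_zero.2 fun ε hε => ?_
  have hpos : 0 < |b - a| + 1 := by positivity
  filter_upwards [hbound (ε / (|b - a| + 1)) (by positivity)] with i hi
  refine hi.trans_lt ?_
  rw [div_mul_eq_mul_div, div_lt_iff₀ hpos]
  linarith

theorem tendsto_horizontalIntegral_sub_zero (hd : DifferentiableOn ℂ f (im ⁻¹' [[a, b]]))
    (hf : Tendsto f (stripEnds a b) (𝓝 0)) :
    Tendsto (fun R => horizontalIntegral f a R - horizontalIntegral f b R) atTop (𝓝 0) := by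
  have hright := tendsto_verticalIntegral_zero hf (u := fun R : ℝ => R) tendsto_abs_atTop_atTop
  have hleft := tendsto_verticalIntegral_zero hf (u := fun R : ℝ => -R)
    (by simpa using tendsto_abs_atTop_atTop)
  have hsides := (hleft.const_smul I).sub (hright.const_smul I)
  rw [smul_zero, sub_zero] at hsides
  refine hsides.congr fun R => ?_
  have hrect := integral_boundary_rect_eq_zero_of_differentiableOn f
    (-R + a * I) (R + b * I) (hd.mono fun w hw => by simpa using (mem_reProdIm.1 hw).2)
  simp only [add_re, neg_re, ofReal_re, re_ofReal_mul, I_re, mul_zero, add_zero, add_im, neg_im,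
    ofReal_im, neg_zero, im_ofReal_mul, I_im, mul_one, zero_add] at hrect
  rw [horizontalIntegral, horizontalIntegral]
  linear_combination (norm := module) -hrect

theorem add_ofReal_mul_I_ne_zero (hc : c ≠ 0) (x : ℝ) : (x : ℂ) + c * I ≠ 0 :=
  fun h => hc (by simpa using congrArg im h)

theorem continuous_zpow_horizontal (hc : c ≠ 0) (m : ℤ) :
    Continuous fun x : ℝ => ((x : ℂ) + c * I) ^ m :=
  Continuous.zpow₀ (by fun_prop) m fun x => .inl (add_ofReal_mul_I_ne_zero hc x)

theorem horizontalIntegral_zpow (hc : c ≠ 0) {m : ℤ} (hm : m ≠ -1) (R : ℝ) :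
    horizontalIntegral (· ^ m) c R =
      ((R + c * I) ^ (m + 1) - ((-R : ℝ) + c * I) ^ (m + 1)) / (m + 1 : ℂ) := by
  have hm' : (m : ℂ) + 1 ≠ 0 := by
    rw [ne_eq, add_eq_zero_iff_eq_neg]
    exact_mod_cast hm
  have hderiv (x : ℝ) : HasDerivAt (fun x : ℝ => ((x : ℂ) + c * I) ^ (m + 1) / (m + 1 : ℂ))
      (((x : ℂ) + c * I) ^ m) x := by
    have h := (hasDerivAt_zpow (m + 1) _ (.inl (add_ofReal_mul_I_ne_zero hc x))).comp x
      ((ofRealCLM.hasDerivAt (x := x)).add_const (c * I))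
    convert! h.div_const (m + 1 : ℂ) using 1
    simp [hm']
  rw [horizontalIntegral, intervalIntegral.integral_eq_sub_of_hasDerivAt (fun x _ => hderiv x)
    ((continuous_zpow_horizontal hc m).intervalIntegrable _ _), sub_div]

theorem tendsto_zpow_cobounded_zero {m : ℤ} (hm : m < 0) :
    Tendsto (fun w : ℂ => w ^ m) (cobounded ℂ) (𝓝 0) := by
  rw [tendsto_zero_iff_norm_tendsto_zero]
  simpa only [norm_zpow, Function.comp_def] using
    (tendsto_zpow_atTop_zero hm).comp tendsto_norm_cobounded_atTop

theorem tendsto_horizontalIntegral_zpow (hc : c ≠ 0) {m : ℤ} (hm : m < -1) :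
    Tendsto (horizontalIntegral (fun w => w ^ m) c) atTop (𝓝 0) := by
  have hzpow := tendsto_zpow_cobounded_zero (show m + 1 < 0 by lia)
  have hright := hzpow.comp (tendsto_add_mul_I_cobounded tendsto_abs_atTop_atTop c)
  have hleft := hzpow.comp (tendsto_add_mul_I_cobounded (u := fun R : ℝ => -R)
    (by simpa using tendsto_abs_atTop_atTop) c)
  simpa [Function.comp_def, funext (horizontalIntegral_zpow hc hm.ne)] using
    (hright.sub hleft).div_const (m + 1 : ℂ)

theorem horizontalIntegral_inv (hc : c ≠ 0) (R : ℝ) :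
    horizontalIntegral (·⁻¹) c R = -(2 * Real.arctan (R / c)) * I := by
  -- Averaging over `x` and `-x` removes the odd real part of the integrand.
  have hsymm (x : ℝ) : ((x : ℂ) + c * I)⁻¹ + ((-x : ℝ) + c * I)⁻¹ =
      ((c ^ 2 + x ^ 2)⁻¹ : ℝ) * (-2 * c * I) := by
    have hx := add_ofReal_mul_I_ne_zero hc x
    have hnegx := add_ofReal_mul_I_ne_zero hc (-x)
    have hprod : ((c ^ 2 + x ^ 2 : ℝ) : ℂ) = -((x + c * I) * ((-x : ℝ) + c * I)) := by
      push_cast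
      linear_combination (c : ℂ) ^ 2 * I_sq
    rw [ofReal_inv, hprod]
    field_simp
    push_cast
    ring
  have hcont : Continuous fun x : ℝ => ((x : ℂ) + c * I)⁻¹ := by
    simpa using continuous_zpow_horizontal hc (-1)
  have hc' : (c : ℂ) ≠ 0 := ofReal_ne_zero.2 hc
  have hdouble := calc
    horizontalIntegral (·⁻¹) c R + horizontalIntegral (·⁻¹) c R
    _ = ∫ x in (-R)..R, (((x : ℂ) + c * I)⁻¹ + ((-x : ℝ) + c * I)⁻¹) := by
      rw [intervalIntegral.integral_add (hcont.intervalIntegrable _ _)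
        ((hcont.comp' continuous_neg).intervalIntegrable _ _),
        intervalIntegral.integral_comp_neg (fun x : ℝ => ((x : ℂ) + c * I)⁻¹), neg_neg,
        horizontalIntegral]
    _ = (∫ x in (-R)..R, (c ^ 2 + x ^ 2)⁻¹ : ℝ) * (-2 * c * I) := by
      simp_rw [hsymm]
      rw [intervalIntegral.integral_mul_const, intervalIntegral.integral_ofReal]
    _ = 2 * (-(2 * Real.arctan (R / c)) * I) := by
      rw [integral_inv_sq_add_sq hc, neg_div, Real.arctan_neg]
      push_cast
      field_simp
      ring
  linear_combination hdouble / 2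

theorem tendsto_horizontalIntegral_inv_sub (ha : a < 0) (hb : 0 < b) :
    Tendsto (fun R => horizontalIntegral (·⁻¹) a R - horizontalIntegral (·⁻¹) b R) atTop
      (𝓝 (2 * π * I)) := by
  have hlim_a : Tendsto (fun R => Real.arctan (R / a)) atTop (𝓝 (-(π / 2))) :=
    (tendsto_nhds_of_tendsto_nhdsWithin Real.tendsto_arctan_atBot).comp
      (tendsto_id.atTop_div_const_of_neg ha)
  have hlim_b : Tendsto (fun R => Real.arctan (R / b)) atTop (𝓝 (π / 2)) :=
    (tendsto_nhds_of_tendsto_nhdsWithin Real.tendsto_arctan_atTop).comp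
      (tendsto_id.atTop_div_const hb)
  have hlim := ((continuous_ofReal.tendsto _).comp (hlim_b.sub hlim_a)).mul_const (2 * I)
  convert! hlim using 2
  · simp only [horizontalIntegral_inv ha.ne, horizontalIntegral_inv hb.ne', Function.comp_apply]
    push_cast
    ring
  · push_cast
    ring

theorem tendsto_horizontalIntegral_zpow_sub (ha : a < 0) (hb : 0 < b) {m : ℤ} (hm : m < 0) :
    Tendsto (fun R => horizontalIntegral (· ^ m) a R - horizontalIntegral (· ^ m) b R) atTop
      (𝓝 (if m = -1 then 2 * π * I else 0)) := by
  split_ifs with h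
  · simpa [h] using tendsto_horizontalIntegral_inv_sub ha hb
  · have hm' : m < -1 := by lia
    simpa using (tendsto_horizontalIntegral_zpow ha.ne hm').sub
      (tendsto_horizontalIntegral_zpow hb.ne' hm')

variable [CompleteSpace E]

theorem horizontalIntegral_sum_zpow_smul_add (hc : c ≠ 0) {r : ℂ → E}
    (hr : Continuous fun x : ℝ => r (x + c * I)) {ι : Type*} (s : Finset ι) (m : ι → ℤ)
    (v : ι → E) (hf : ∀ w ≠ 0, f w = (∑ i ∈ s, w ^ m i • v i) + r w) (R : ℝ) :
    horizontalIntegral f c R =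
      (∑ i ∈ s, horizontalIntegral (· ^ m i) c R • v i) + horizontalIntegral r c R := by
  have hterm (i : ι) : Continuous fun x : ℝ => ((x : ℂ) + c * I) ^ m i • v i :=
    (continuous_zpow_horizontal hc (m i)).smul continuous_const
  have hfx (x : ℝ) := hf _ (add_ofReal_mul_I_ne_zero hc x)
  simp only [horizontalIntegral, hfx]
  rw [intervalIntegral.integral_add ((continuous_finsetSum s fun i _ => hterm i).intervalIntegrable
    _ _) (hr.intervalIntegrable _ _),
    intervalIntegral.integral_finsetSum fun i _ => (hterm i).intervalIntegrable _ _]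
  simp only [intervalIntegral.integral_smul_const]

theorem tendsto_horizontalIntegral_sub_of_laurent (ha : a < 0) (hb : 0 < b) {ι : Type*}
    {s : Finset ι} {m : ι → ℤ} (hm : ∀ i ∈ s, m i < 0) {v : ι → E} {r : ℂ → E}
    (hr : DifferentiableOn ℂ r (im ⁻¹' [[a, b]]))
    (hf : ∀ w ≠ 0, f w = (∑ i ∈ s, w ^ m i • v i) + r w)
    (hends : Tendsto f (stripEnds a b) (𝓝 0)) :
    Tendsto (fun R => horizontalIntegral f a R - horizontalIntegral f b R) atTop
      (𝓝 ((2 * π * I) • ∑ i ∈ s with m i = -1, v i)) := by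
  have hr_ends : Tendsto r (stripEnds a b) (𝓝 0) := by
    have hprincipal : Tendsto (fun w : ℂ => ∑ i ∈ s, w ^ m i • v i) (stripEnds a b) (𝓝 0) := by
      simpa using tendsto_finsetSum s fun i hi =>
        ((tendsto_zpow_cobounded_zero (hm i hi)).mono_left stripEnds_le_cobounded).smul_const (v i)
    rw [← sub_zero (0 : E)]
    refine (hends.sub hprincipal).congr' ?_
    filter_upwards [stripEnds_le_cobounded (eventually_ne_cobounded 0)] with w hw
    rw [hf w hw, add_sub_cancel_left]
  have hline {c : ℝ} (hc : c ≠ 0) (hcab : c ∈ [[a, b]]) :=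
    horizontalIntegral_sum_zpow_smul_add hc
      (hr.continuousOn.comp_continuous (by fun_prop) fun x => by simpa using hcab) s m v hf
  have hlim := (tendsto_finsetSum s fun i hi =>
    (tendsto_horizontalIntegral_zpow_sub ha hb (hm i hi)).smul_const (v i)).add
      (tendsto_horizontalIntegral_sub_zero hr hr_ends)
  have hresidue : (∑ i ∈ s, (if m i = -1 then 2 * π * I else 0 : ℂ) • v i) + 0 =
      (2 * π * I) • ∑ i ∈ s with m i = -1, v i := by
    simp only [add_zero, ite_smul, zero_smul, Finset.sum_filter, Finset.smul_sum, smul_ite,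
      smul_zero]
  rw [← hresidue]
  refine hlim.congr fun R => ?_
  rw [hline ha.ne left_mem_uIcc, hline hb.ne' right_mem_uIcc, add_sub_add_comm,
    ← Finset.sum_sub_distrib]
  simp only [sub_smul]

theorem exists_taylor_remainder_differentiableOn {s : Set ℂ} (hg : DifferentiableOn ℂ g s)
    (hs : s ∈ 𝓝 0) (n : ℕ) :
    ∃ r : ℂ → E, DifferentiableOn ℂ r s ∧ ∀ w,
      g w = (∑ i ∈ Finset.range n, (w ^ i / i !) • iteratedDeriv i g 0) + w ^ n • r w := by
  obtain ⟨r, hr, hgr⟩ := (hg.analyticAt hs).exists_eq_sum_add_pow_mul n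
  refine ⟨r, fun w hw => ?_, hgr⟩
  rcases eq_or_ne w 0 with rfl | hw0
  · exact hr.differentiableAt.differentiableWithinAt
  have hquot : DifferentiableWithinAt ℂ (fun w => (w ^ n)⁻¹ •
      (g w - ∑ i ∈ Finset.range n, (w ^ i / i !) • iteratedDeriv i g 0)) s w := by
    have := hg w hw
    have : w ^ n ≠ 0 := pow_ne_zero n hw0
    fun_prop (disch := assumption)
  refine hquot.congr_of_eventuallyEq ?_ ?_
  · filter_upwards [mem_nhdsWithin_of_mem_nhds (isOpen_ne.mem_nhds hw0)] with v hv
    rw [hgr v, add_sub_cancel_left, inv_smul_smul₀ (pow_ne_zero n hv)]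
  · rw [hgr w, add_sub_cancel_left, inv_smul_smul₀ (pow_ne_zero n hw0)]

theorem exists_inv_pow_smul_eq_sum_zpow_smul_add {s : Set ℂ} (hg : DifferentiableOn ℂ g s)
    (hs : s ∈ 𝓝 0) (n : ℕ) :
    ∃ r : ℂ → E, DifferentiableOn ℂ r s ∧ ∀ w ≠ 0, (w ^ n)⁻¹ • g w =
      (∑ i ∈ Finset.range n, w ^ (i - n : ℤ) • ((i ! : ℂ)⁻¹ • iteratedDeriv i g 0)) + r w := by
  obtain ⟨r, hr, hgr⟩ := exists_taylor_remainder_differentiableOn hg hs n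
  refine ⟨r, hr, fun w hw => ?_⟩
  rw [hgr w, smul_add, inv_smul_smul₀ (pow_ne_zero n hw), Finset.smul_sum]
  congr! 2 with i
  rw [smul_smul, smul_smul, zpow_sub₀ hw, zpow_natCast, zpow_natCast]
  congr 1
  ring

theorem im_preimage_uIcc_mem_nhds_zero (ha : a < 0) (hb : 0 < b) : im ⁻¹' [[a, b]] ∈ 𝓝 (0 : ℂ) :=
  continuous_im.continuousAt.preimage_mem_nhds (by
    simpa [uIcc_of_le (ha.trans hb).le] using Icc_mem_nhds ha hb)

theorem tendsto_horizontalIntegral_inv_pow_smul_sub (ha : a < 0) (hb : 0 < b) (n : ℕ)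
    (hg : DifferentiableOn ℂ g (im ⁻¹' [[a, b]]))
    (hends : Tendsto (fun w => (w ^ (n + 1))⁻¹ • g w) (stripEnds a b) (𝓝 0)) :
    Tendsto (fun R => horizontalIntegral (fun w => (w ^ (n + 1))⁻¹ • g w) a R -
        horizontalIntegral (fun w => (w ^ (n + 1))⁻¹ • g w) b R) atTop
      (𝓝 ((2 * π * I / n !) • iteratedDeriv n g 0)) := by
  obtain ⟨r, hr, hlaurent⟩ := exists_inv_pow_smul_eq_sum_zpow_smul_add hg
    (im_preimage_uIcc_mem_nhds_zero ha hb) (n + 1)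
  have hneg (i : ℕ) (hi : i ∈ Finset.range (n + 1)) : (i - (n + 1 : ℕ) : ℤ) < 0 := by
    have := Finset.mem_range.1 hi
    lia
  have hsimple (i : ℕ) : (i - (n + 1 : ℕ) : ℤ) = -1 ↔ i = n := by lia
  convert! tendsto_horizontalIntegral_sub_of_laurent ha hb hneg hr hlaurent hends using 2
  simp only [hsimple]
  simp [Finset.filter_eq', smul_smul, div_eq_mul_inv]

theorem integral_sub_integral_inv_pow_smul (ha : a < 0) (hb : 0 < b) (n : ℕ)
    (hg : DifferentiableOn ℂ g (im ⁻¹' [[a, b]]))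
    (hends : Tendsto (fun w => (w ^ (n + 1))⁻¹ • g w) (stripEnds a b) (𝓝 0))
    (hint_a : Integrable fun x : ℝ => ((x + a * I : ℂ) ^ (n + 1))⁻¹ • g (x + a * I))
    (hint_b : Integrable fun x : ℝ => ((x + b * I : ℂ) ^ (n + 1))⁻¹ • g (x + b * I)) :
    (∫ x : ℝ, ((x + a * I : ℂ) ^ (n + 1))⁻¹ • g (x + a * I)) -
        ∫ x : ℝ, ((x + b * I : ℂ) ^ (n + 1))⁻¹ • g (x + b * I) =
      (2 * π * I / n !) • iteratedDeriv n g 0 :=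
  tendsto_nhds_unique
    ((intervalIntegral_tendsto_integral hint_a tendsto_neg_atTop_atBot tendsto_id).sub
      (intervalIntegral_tendsto_integral hint_b tendsto_neg_atTop_atBot tendsto_id))
    (tendsto_horizontalIntegral_inv_pow_smul_sub ha hb n hg hends)

end Strip

section Derivatives

variable {𝕜 : Type*} [NontriviallyNormedField 𝕜] {f g : 𝕜 → 𝕜} {x : 𝕜}

theorem iteratedDeriv_dslope_self [CompleteSpace 𝕜] [CharZero 𝕜] (hf : AnalyticAt 𝕜 f x) (n : ℕ) :
    iteratedDeriv n (dslope f x) x = iteratedDeriv (n + 1) f x / (n + 1) := by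
  have hslope := hf.hasFPowerSeriesAt.has_fpower_series_dslope_fslope
  have hcoeff := congrArg (FormalMultilinearSeries.coeff · n)
    (hslope.analyticAt.hasFPowerSeriesAt.eq_formalMultilinearSeries hslope)
  simp only [FormalMultilinearSeries.coeff_fslope, FormalMultilinearSeries.coeff_ofScalars,
    Nat.factorial_succ, Nat.cast_mul, Nat.cast_succ] at hcoeff
  have : (n ! : 𝕜) ≠ 0 := by exact_mod_cast n.factorial_ne_zero
  field_simp at hcoeff
  rw [eq_div_iff (by exact_mod_cast n.succ_ne_zero), hcoeff]

theorem iteratedDeriv_two_div_of_deriv_eq_zero (hf : ContDiffAt 𝕜 2 f x) (hg : ContDiffAt 𝕜 2 g x)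
    (hgx : g x ≠ 0) (hg' : deriv g x = 0) :
    iteratedDeriv 2 (f / g) x =
      (iteratedDeriv 2 f x - f x / g x * iteratedDeriv 2 g x) / g x := by
  have hmul : f / g * g =ᶠ[𝓝 x] f := by
    filter_upwards [hg.continuousAt.eventually_ne hgx] with y hy
    exact div_mul_cancel₀ _ hy
  have hleibniz : iteratedDeriv 2 f x =
      f x / g x * iteratedDeriv 2 g x + iteratedDeriv 2 (f / g) x * g x := by
    rw [← hmul.iteratedDeriv_eq, iteratedDeriv_mul (hf.div hg hgx) hg]
    simp [Finset.sum_range_succ, iteratedDeriv_one, hg']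
  rw [hleibniz, add_sub_cancel_left, mul_div_cancel_right₀ _ hgx]

end Derivatives

section Sinh

theorem abs_sinh_re_le_norm_sinh (z : ℂ) : |Real.sinh z.re| ≤ ‖Complex.sinh z‖ := by
  rw [Real.sinh_eq, Complex.sinh, ← neg_re, ← Complex.norm_exp, ← Complex.norm_exp, norm_div,
    abs_div, Complex.norm_ofNat, abs_two]
  gcongr
  exact abs_norm_sub_norm_le _ _

theorem exp_div_four_le_sinh {x : ℝ} (hx : 1 ≤ x) : Real.exp x / 4 ≤ Real.sinh x := by
  rw [Real.sinh_eq]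
  have hexp := Real.add_one_le_exp x
  have hexp_neg : Real.exp (-x) ≤ 1 := Real.exp_le_one_iff.2 (by linarith)
  linarith

theorem exp_abs_re_div_four_le_norm_sinh {z : ℂ} (hz : 1 ≤ |z.re|) :
    Real.exp |z.re| / 4 ≤ ‖Complex.sinh z‖ :=
  calc
    Real.exp |z.re| / 4 ≤ Real.sinh |z.re| := exp_div_four_le_sinh hz
    _ = |Real.sinh z.re| := (Real.abs_sinh _).symm
    _ ≤ ‖Complex.sinh z‖ := abs_sinh_re_le_norm_sinh z

theorem sinh_ne_zero_of_abs_im_lt_pi {z : ℂ} (hz : z ≠ 0) (him : |z.im| < π) :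
    Complex.sinh z ≠ 0 := by
  intro hsinh
  obtain ⟨k, hk⟩ := Complex.sin_eq_zero_iff.1 (show Complex.sin (z * I) = 0 by
    rw [Complex.sin_mul_I, hsinh, zero_mul])
  have hkim : z.re = 0 := by simpa using congrArg im hk
  have hkre : -z.im = k * π := by simpa using congrArg re hk
  have hk0 : k = 0 := by
    rw [← abs_neg, hkre, abs_mul, abs_of_pos pi_pos, mul_lt_iff_lt_one_left pi_pos] at him
    exact Int.abs_lt_one_iff.1 (by exact_mod_cast him)
  exact hz (Complex.ext hkim (by simpa [hk0] using hkre))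

/-- The entire function `sinh z / z`, with value `1` at the origin. It isolates the zero of `sinh`
that causes the pole of the dilogarithm integrand. -/
noncomputable def sinhc : ℂ → ℂ := dslope Complex.sinh 0

theorem mul_sinhc (z : ℂ) : z * sinhc z = Complex.sinh z := by
  simpa [sinhc] using sub_smul_dslope Complex.sinh 0 z

theorem differentiable_sinhc : Differentiable ℂ sinhc :=
  differentiableOn_univ.1 <| (Complex.differentiableOn_dslope univ_mem).2
    Complex.differentiable_sinh.differentiableOn

theorem iteratedDeriv_sinhc_zero (n : ℕ) :
    iteratedDeriv n sinhc 0 = iteratedDeriv (n + 1) Complex.sinh 0 / (n + 1) :=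
  iteratedDeriv_dslope_self (Complex.differentiable_sinh.analyticAt 0) n

theorem sinhc_zero : sinhc 0 = 1 := by simp [sinhc]

theorem deriv_sinhc_zero : deriv sinhc 0 = 0 := by
  rw [← iteratedDeriv_one, iteratedDeriv_sinhc_zero]
  simp

theorem iteratedDeriv_two_sinhc_zero : iteratedDeriv 2 sinhc 0 = 1 / 3 := by
  rw [iteratedDeriv_sinhc_zero]
  norm_num

theorem sinhc_ne_zero_of_abs_im_lt_pi {z : ℂ} (hz : |z.im| < π) : sinhc z ≠ 0 := by
  rcases eq_or_ne z 0 with rfl | hz0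
  · simp [sinhc_zero]
  · exact right_ne_zero_of_mul (mul_sinhc z ▸ sinh_ne_zero_of_abs_im_lt_pi hz0 hz)

theorem deriv_sinhc_mul_sinhc_zero (β γ : ℂ) :
    deriv (fun w => sinhc (β * w) * sinhc (γ * w)) 0 = 0 := by
  have h (c : ℂ) : DifferentiableAt ℂ (fun w => sinhc (c * w)) 0 := by
    have := differentiable_sinhc
    fun_prop
  rw [deriv_fun_mul (h β) (h γ)]
  simp [deriv_comp_mul_left, deriv_sinhc_zero]

theorem iteratedDeriv_two_sinhc_mul_sinhc_zero (β γ : ℂ) :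
    iteratedDeriv 2 (fun w => sinhc (β * w) * sinhc (γ * w)) 0 = (β ^ 2 + γ ^ 2) / 3 := by
  have hsmooth {n : ℕ} : ContDiff ℂ n sinhc := differentiable_sinhc.contDiff
  rw [iteratedDeriv_fun_mul (by fun_prop) (by fun_prop)]
  calc
    _ = γ ^ 2 * 3⁻¹ + β ^ 2 * 3⁻¹ := by
      simp [Finset.sum_range_succ, iteratedDeriv_comp_const_mul hsmooth, sinhc_zero,
        deriv_sinhc_zero, iteratedDeriv_two_sinhc_zero, iteratedDeriv_one]
    _ = (β ^ 2 + γ ^ 2) / 3 := by ring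

end Sinh

section Real

theorem one_div_two_mul_sqrt_inv_sq {x : ℝ} (hx : 0 ≤ x) : 1 / (2 * √(x ^ 2)⁻¹) = x / 2 := by
  rw [Real.sqrt_inv, Real.sqrt_sq hx, one_div, mul_inv, inv_inv]
  ring

theorem abs_mul_lt_pi {b y : ℝ} (hb : 0 < b) (hy : |y| < π * min b b⁻¹) : |b * y| < π :=
  calc
    |b * y| = b * |y| := by rw [abs_mul, abs_of_pos hb]
    _ < b * (π * min b b⁻¹) := by gcongr
    _ ≤ b * (π * b⁻¹) := by gcongr; exact min_le_right _ _
    _ = π := by field_simp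

theorem integrable_exp_neg_mul_abs {a : ℝ} (ha : 0 < a) :
    Integrable fun x : ℝ => Real.exp (-a * |x|) := by
  have hcont : Continuous fun x : ℝ => Real.exp (-a * |x|) := by fun_prop
  refine hcont.locallyIntegrable.integrable_of_isBigO_atTop_of_norm_isNegInvariant
    (g := fun x => Real.exp (-a * x)) (.of_forall fun x => by simp) ?_
    ⟨Ioi 0, Ioi_mem_atTop 0, integrableOn_exp_mul_Ioi (neg_lt_zero.2 ha) 0⟩
  refine EventuallyEq.isBigO ?_
  filter_upwards [eventually_ge_atTop 0] with x hx
  rw [abs_of_nonneg hx]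

end Real

section FaddeevIntegrand

variable {b : ℝ} {z w : ℂ}

/-- The integrand in the definition of Faddeev's quantum dilogarithm. -/
noncomputable def faddeevIntegrand (b : ℝ) (z w : ℂ) : ℂ :=
  Complex.exp (-2 * I * z * w) / (Complex.sinh (b * w) * Complex.sinh ((b : ℂ)⁻¹ * w) * w)

/-- The factor `w ^ 3 * faddeevIntegrand b z w` left after removing the triple pole at the origin,
written so that its value there is the right one. -/
noncomputable def faddeevRegularPart (b : ℝ) (z w : ℂ) : ℂ :=
  Complex.exp (-2 * I * z * w) / (sinhc (b * w) * sinhc ((b : ℂ)⁻¹ * w))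

theorem faddeevIntegrand_neg (b : ℝ) (z w : ℂ) :
    faddeevIntegrand b z (-w) = -faddeevIntegrand b (-z) w := by
  simp only [faddeevIntegrand, mul_neg, neg_mul, Complex.sinh_neg, neg_neg, div_neg]

theorem faddeevIntegrand_eq_inv_pow_smul (hb : b ≠ 0) (z w : ℂ) :
    faddeevIntegrand b z w = (w ^ (2 + 1))⁻¹ • faddeevRegularPart b z w := by
  have hb' : (b : ℂ) ≠ 0 := ofReal_ne_zero.2 hb
  have hdenom : Complex.sinh (b * w) * Complex.sinh ((b : ℂ)⁻¹ * w) * w =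
      w ^ (2 + 1) * (sinhc (b * w) * sinhc ((b : ℂ)⁻¹ * w)) := by
    rw [← mul_sinhc, ← mul_sinhc]
    field_simp
    ring
  rw [faddeevIntegrand, hdenom, faddeevRegularPart, smul_eq_mul, div_mul_eq_div_div_swap,
    div_eq_inv_mul]

theorem iteratedDeriv_two_faddeevRegularPart (b : ℝ) (z : ℂ) :
    iteratedDeriv 2 (faddeevRegularPart b z) 0 =
      -4 * z ^ 2 - ((b : ℂ) ^ 2 + ((b : ℂ) ^ 2)⁻¹) / 3 := by
  have hsinhc {n : ℕ∞} : ContDiff ℂ n sinhc := differentiable_sinhc.contDiff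
  refine (iteratedDeriv_two_div_of_deriv_eq_zero (by fun_prop) (by fun_prop)
    (by simp [sinhc_zero]) (deriv_sinhc_mul_sinhc_zero _ _)).trans ?_
  rw [iteratedDeriv_two_sinhc_mul_sinhc_zero, iteratedDeriv_cexp_const_mul]
  simp only [mul_zero, Complex.exp_zero, mul_pow, I_sq, sinhc_zero]
  ring

theorem sinhc_mul_sinhc_ne_zero (hb : 0 < b) (hw : |w.im| < π * min b b⁻¹) :
    sinhc (b * w) * sinhc ((b : ℂ)⁻¹ * w) ≠ 0 := by
  refine mul_ne_zero (sinhc_ne_zero_of_abs_im_lt_pi ?_) (sinhc_ne_zero_of_abs_im_lt_pi ?_)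
  · rw [im_ofReal_mul]
    exact abs_mul_lt_pi hb hw
  · rw [← ofReal_inv, im_ofReal_mul]
    exact abs_mul_lt_pi (inv_pos.2 hb) (by rwa [inv_inv, min_comm])

theorem differentiableOn_faddeevRegularPart (hb : 0 < b) (z : ℂ) :
    DifferentiableOn ℂ (faddeevRegularPart b z) {w | |w.im| < π * min b b⁻¹} := by
  have hsinhc := differentiable_sinhc
  exact DifferentiableOn.div (by fun_prop) (by fun_prop) fun w hw => sinhc_mul_sinhc_ne_zero hb hw

theorem norm_exp_neg_two_mul_I_mul_le (z w : ℂ) :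
    ‖Complex.exp (-2 * I * z * w)‖ ≤
      Real.exp (2 * |z.re| * |w.im|) * Real.exp (2 * |z.im| * |w.re|) := by
  rw [Complex.norm_exp, ← Real.exp_add, Real.exp_le_exp]
  calc
    (-2 * I * z * w).re = 2 * (z.re * w.im) + 2 * (z.im * w.re) := by
      simp only [neg_mul, neg_re, mul_re, mul_im, re_ofNat, im_ofNat, I_re, I_im]
      ring
    _ ≤ 2 * |z.re * w.im| + 2 * |z.im * w.re| := by gcongr <;> exact le_abs_self _
    _ = 2 * |z.re| * |w.im| + 2 * |z.im| * |w.re| := by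
      rw [abs_mul, abs_mul]
      ring

theorem exp_mul_abs_re_div_four_le_norm_sinh_mul (hb : 0 < b) (hw : b⁻¹ ≤ |w.re|) :
    Real.exp (b * |w.re|) / 4 ≤ ‖Complex.sinh (b * w)‖ := by
  have habs : |(b * w).re| = b * |w.re| := by rw [re_ofReal_mul, abs_mul, abs_of_pos hb]
  rw [← habs]
  refine exp_abs_re_div_four_le_norm_sinh ?_
  rwa [habs, ← inv_le_iff_one_le_mul₀' hb]

theorem norm_faddeevIntegrand_le (hb : 0 < b) (z : ℂ) (hw : max b b⁻¹ ≤ |w.re|) :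
    ‖faddeevIntegrand b z w‖ ≤ 16 * Real.exp (2 * |z.re| * |w.im|) *
      Real.exp (-(b + b⁻¹ - 2 * |z.im|) * |w.re|) := by
  obtain ⟨hwb, hwb'⟩ := max_le_iff.1 hw
  have hsinh := exp_mul_abs_re_div_four_le_norm_sinh_mul hb hwb'
  have hsinh' := exp_mul_abs_re_div_four_le_norm_sinh_mul (w := w) (inv_pos.2 hb) (by rwa [inv_inv])
  rw [ofReal_inv] at hsinh'
  have hnorm : 1 ≤ ‖w‖ := by
    refine le_trans ?_ (hw.trans (abs_re_le_norm w))
    rcases le_total 1 b with h | h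
    · exact h.trans (le_max_left _ _)
    · exact (one_le_inv₀ hb |>.2 h).trans (le_max_right _ _)
  rw [faddeevIntegrand, norm_div, norm_mul, norm_mul]
  calc
    _ ≤ Real.exp (2 * |z.re| * |w.im|) * Real.exp (2 * |z.im| * |w.re|) /
        (Real.exp (b * |w.re|) / 4 * (Real.exp (b⁻¹ * |w.re|) / 4) * 1) := by
      gcongr
      exact norm_exp_neg_two_mul_I_mul_le z w
    _ = _ := by
      rw [show -(b + b⁻¹ - 2 * |z.im|) * |w.re| =
        2 * |z.im| * |w.re| - b * |w.re| - b⁻¹ * |w.re| by ring, Real.exp_sub, Real.exp_sub]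
      field_simp
      norm_num

theorem tendsto_faddeevIntegrand_stripEnds (hb : 0 < b) (hz : 2 * |z.im| < b + b⁻¹) (c d : ℝ) :
    Tendsto (faddeevIntegrand b z) (stripEnds c d) (𝓝 0) := by
  obtain ⟨M, hM⟩ := (isCompact_uIcc (a := c) (b := d)).exists_bound_of_continuousOn continuousOn_id
  have hre : Tendsto (fun w : ℂ => |w.re|) (stripEnds c d) atTop :=
    tendsto_comap.mono_left inf_le_left
  have him : ∀ᶠ w in stripEnds c d, w.im ∈ [[c, d]] :=
    eventually_inf_principal.2 (.of_forall fun _ hw => hw)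
  have hexp : Tendsto (fun w : ℂ => 16 * Real.exp (2 * |z.re| * M) *
      Real.exp (-(b + b⁻¹ - 2 * |z.im|) * |w.re|)) (stripEnds c d) (𝓝 0) := by
    simpa using (Real.tendsto_exp_atBot.comp
      (hre.const_mul_atTop_of_neg (r := -(b + b⁻¹ - 2 * |z.im|)) (by linarith))).const_mul
        (16 * Real.exp (2 * |z.re| * M))
  refine squeeze_zero_norm' ?_ hexp
  filter_upwards [hre.eventually_ge_atTop (max b b⁻¹), him] with w hw hwim
  refine (norm_faddeevIntegrand_le hb z hw).trans ?_
  gcongr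
  exact hM _ hwim

theorem continuous_faddeevIntegrand_horizontal (hb : 0 < b) (z : ℂ) {c : ℝ} (hc : c ≠ 0)
    (hcb : |c| < π * min b b⁻¹) : Continuous fun x : ℝ => faddeevIntegrand b z (x + c * I) := by
  simp only [faddeevIntegrand_eq_inv_pow_smul hb.ne']
  refine .smul (.inv₀ (by fun_prop) fun x => pow_ne_zero _ (add_ofReal_mul_I_ne_zero hc x)) ?_
  exact (differentiableOn_faddeevRegularPart hb z).continuousOn.comp_continuous (by fun_prop)
    fun x => by simpa using hcb

theorem integrable_faddeevIntegrand_horizontal (hb : 0 < b) (hz : 2 * |z.im| < b + b⁻¹) {c : ℝ}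
    (hc : c ≠ 0) (hcb : |c| < π * min b b⁻¹) :
    Integrable fun x : ℝ => faddeevIntegrand b z (x + c * I) := by
  refine (continuous_faddeevIntegrand_horizontal hb z hc
    hcb).locallyIntegrable.integrable_of_isBigO_cocompact
      (.of_bound (16 * Real.exp (2 * |z.re| * |c|)) ?_)
      ((integrable_exp_neg_mul_abs (sub_pos.2 hz)).integrableAtFilter _)
  filter_upwards [(tendsto_norm_cocompact_atTop (E := ℝ)).eventually_ge_atTop (max b b⁻¹)] with x hx
  simpa using norm_faddeevIntegrand_le hb z (w := x + c * I) (by simpa using hx)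

theorem integral_faddeevIntegrand_neg (b c : ℝ) (z : ℂ) :
    ∫ x : ℝ, faddeevIntegrand b (-z) (x + c * I) =
      -∫ x : ℝ, faddeevIntegrand b z (x + (-c : ℝ) * I) := by
  rw [← integral_neg_eq_self, ← integral_neg]
  congr 1 with x
  rw [← neg_eq_iff_eq_neg, ← faddeevIntegrand_neg]
  push_cast
  congr 1
  ring

theorem integral_faddeevIntegrand_add_integral_neg (hb : 0 < b) (hz : 2 * |z.im| < b + b⁻¹) {ε : ℝ}
    (hε : 0 < ε) (hεb : ε < π * min b b⁻¹) :
    (∫ x : ℝ, faddeevIntegrand b z (x + ε * I)) + ∫ x : ℝ, faddeevIntegrand b (-z) (x + ε * I) =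
      4 * (I * π / 12 * ((b : ℂ) ^ 2 + ((b : ℂ) ^ 2)⁻¹) + I * π * z ^ 2) := by
  have hε_neg : -ε < 0 := neg_lt_zero.2 hε
  have hstrip : im ⁻¹' [[-ε, ε]] ⊆ {w | |w.im| < π * min b b⁻¹} := fun w hw => by
    rw [uIcc_of_le (by linarith)] at hw
    exact (abs_le.2 hw).trans_lt hεb
  have hends := tendsto_faddeevIntegrand_stripEnds hb hz (-ε) ε
  have hint := integrable_faddeevIntegrand_horizontal hb hz hε.ne' (by rwa [abs_of_pos hε])
  have hint_neg := integrable_faddeevIntegrand_horizontal hb hz hε_neg.ne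
    (by rwa [abs_neg, abs_of_pos hε])
  rw [integral_faddeevIntegrand_neg]
  simp only [faddeevIntegrand_eq_inv_pow_smul hb.ne',
    funext (faddeevIntegrand_eq_inv_pow_smul hb.ne' z)] at hends hint hint_neg ⊢
  have hresidue := integral_sub_integral_inv_pow_smul hε_neg hε 2
    ((differentiableOn_faddeevRegularPart hb z).mono hstrip) hends hint_neg hint
  rw [iteratedDeriv_two_faddeevRegularPart, smul_eq_mul, Nat.factorial_two] at hresidue
  push_cast at hresidue ⊢
  linear_combination -hresidue

theorem faddeevPhi_eq_exp_integral (b : ℝ) (z : ℂ) :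
    faddeevPhi b z = Complex.exp
      (1 / 4 * ∫ x : ℝ, faddeevIntegrand b z (x + (π * min b b⁻¹ / 2 : ℝ) * I)) :=
  rfl

end FaddeevIntegrand

/-- Inversion relation for Faddeev's quantum dilogarithm: for `b > 0`,
`ħ = (b + b⁻¹)⁻²` and `z` in the strip `ℝ + i(-1/(2√ħ), 1/(2√ħ))`,
`Φ_b(z)·Φ_b(-z) = e^{iπ(b²+b⁻²)/12}·e^{iπz²}`. -/
theorem faddeevPhi_inversion (b : ℝ) (hb : 0 < b) (z : ℂ)
    (hz : |z.im| < 1 / (2 * Real.sqrt (((b + b⁻¹) ^ 2)⁻¹))) :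
    faddeevPhi b z * faddeevPhi b (-z)
      = Complex.exp (Complex.I * (π : ℂ) / 12 * ((b : ℂ) ^ 2 + ((b : ℂ) ^ 2)⁻¹))
        * Complex.exp (Complex.I * (π : ℂ) * z ^ 2) := by
  have hz' : 2 * |z.im| < b + b⁻¹ := by
    rw [one_div_two_mul_sqrt_inv_sq (by positivity)] at hz
    linarith
  have hwidth : 0 < π * min b b⁻¹ := mul_pos pi_pos (lt_min hb (inv_pos.2 hb))
  have hsum := integral_faddeevIntegrand_add_integral_neg hb hz' (half_pos hwidth)
    (half_lt_self hwidth)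
  rw [faddeevPhi_eq_exp_integral, faddeevPhi_eq_exp_integral, ← Complex.exp_add, ← mul_add, hsum,
    ← Complex.exp_add]
  congr 1
  ring
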